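/- arXiv:2307.00791 — 4 statements merged into one kernel-verified Lean document; each statement's English description precedes it below -/
import Mathlib

section
/- Let n ≥ 1 and let A and B be n×n Hermitian complex matrices. Define, for real M, U(M) = inf { Re(Tr(ρA)) : ρ is a density matrix with Re(Tr(ρB)) = M }. Then U is a convex function on the interval [λ_min(B), λ_max(B)]. (The minimum energy constrained by the magnetization is a convex function of the magnetization.) -/
/-!
The trace functionals `ρ ↦ Re Tr(ρB)` and `ρ ↦ Re Tr(ρA)` are real-affine on the convex set of
density matrices (`IsDensityMatrix.combo`, `re_trace_combo`). Hence mixing competitors for the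
magnetizations `x` and `y` with weights `a` and `b` gives a competitor for `a x + b y` whose energy
is the same mixture, and taking infima gives convexity.

Since `sInf` on `ℝ` takes the value `0` on sets that are empty or unbounded below, both have to be
excluded. Energies are bounded below by the smallest eigenvalue of `A`: in an eigenbasis of `A` the
diagonal of `ρ` is a probability vector and the energy is the corresponding average of the
eigenvalues (`iInf_eigenvalues_le`). Feasible states exist at the two endpoints of the interval,
namely the projections on eigenvectors of `B` (`exists_density_eigenvalue`), hence everywhere in
between by mixing (`exists_density_of_mem_Icc`).
-/

open Matrix ComplexOrder

/-- The smallest eigenvalue of a (Hermitian) matrix. -/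
noncomputable def lamMin {n : ℕ} (A : Matrix (Fin n) (Fin n) ℂ) : ℝ :=
  if hA : A.IsHermitian then ⨅ i, hA.eigenvalues i else 0

/-- The largest eigenvalue of a (Hermitian) matrix. -/
noncomputable def lamMax {n : ℕ} (A : Matrix (Fin n) (Fin n) ℂ) : ℝ :=
  if hA : A.IsHermitian then ⨆ i, hA.eigenvalues i else 0

/-- A density matrix: positive semidefinite with trace one. -/
def IsDensityMatrix {ι : Type*} [Fintype ι] (ρ : Matrix ι ι ℂ) : Prop :=
  ρ.PosSemidef ∧ ρ.trace = 1

theorem IsDensityMatrix.combo {ι : Type*} [Fintype ι] {ρ σ : Matrix ι ι ℂ}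
    (hρ : IsDensityMatrix ρ) (hσ : IsDensityMatrix σ) {a b : ℝ} (ha : 0 ≤ a) (hb : 0 ≤ b)
    (hab : a + b = 1) : IsDensityMatrix ((a : ℂ) • ρ + (b : ℂ) • σ) := by
  refine ⟨(hρ.1.smul (by exact_mod_cast ha)).add (hσ.1.smul (by exact_mod_cast hb)), ?_⟩
  rw [trace_add, trace_smul, trace_smul, hρ.2, hσ.2]
  simp only [smul_eq_mul, mul_one]
  exact_mod_cast hab

theorem re_trace_combo {ι : Type*} [Fintype ι] (ρ σ C : Matrix ι ι ℂ) (a b : ℝ) :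
    ((((a : ℂ) • ρ + (b : ℂ) • σ) * C).trace).re
      = a * ((ρ * C).trace).re + b * ((σ * C).trace).re := by
  simp [add_mul, trace_add]

/-- The energy in terms of the diagonal of `ρ` in an eigenbasis of `A`. -/
theorem re_trace_mul_eq_sum {n : ℕ} {A : Matrix (Fin n) (Fin n) ℂ} (hA : A.IsHermitian)
    (ρ : Matrix (Fin n) (Fin n) ℂ) :
    ((ρ * A).trace).re = ∑ i, (((hA.eigenvectorUnitary : Matrix (Fin n) (Fin n) ℂ)ᴴ * ρ *
      (hA.eigenvectorUnitary : Matrix (Fin n) (Fin n) ℂ)) i i).re * hA.eigenvalues i := by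
  set U : Matrix (Fin n) (Fin n) ℂ := (hA.eigenvectorUnitary : Matrix (Fin n) (Fin n) ℂ) with hU
  have h : A = U * diagonal (fun i => (hA.eigenvalues i : ℂ)) * Uᴴ := by
    have := hA.spectral_theorem
    rw [Unitary.conjStarAlgAut_apply] at this
    exact this
  have h2 : (ρ * A).trace = (Uᴴ * ρ * U * diagonal (fun i => (hA.eigenvalues i : ℂ))).trace := by
    conv_lhs => rw [h]
    rw [← mul_assoc, trace_mul_comm, ← mul_assoc, ← mul_assoc]
  rw [h2, trace, Complex.re_sum]
  refine Finset.sum_congr rfl fun i _ => ?_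
  rw [diag_apply, mul_diagonal, Complex.re_mul_ofReal]

theorem iInf_eigenvalues_le {n : ℕ} {A : Matrix (Fin n) (Fin n) ℂ} (hA : A.IsHermitian)
    {ρ : Matrix (Fin n) (Fin n) ℂ} (hρ : IsDensityMatrix ρ) :
    ⨅ i, hA.eigenvalues i ≤ ((ρ * A).trace).re := by
  rw [re_trace_mul_eq_sum hA]
  set U : Matrix (Fin n) (Fin n) ℂ := (hA.eigenvectorUnitary : Matrix (Fin n) (Fin n) ℂ) with hU
  have hUU : U * Uᴴ = 1 := Unitary.coe_mul_star_self hA.eigenvectorUnitary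
  have hps : (Uᴴ * ρ * U).PosSemidef := hρ.1.conjTranspose_mul_mul_same U
  have htr : ∑ i, ((Uᴴ * ρ * U) i i).re = 1 := by
    have : (Uᴴ * ρ * U).trace = 1 := by
      rw [trace_mul_comm, ← mul_assoc, hUU, one_mul, hρ.2]
    rw [trace] at this
    simpa [Complex.re_sum] using congrArg Complex.re this
  calc ⨅ i, hA.eigenvalues i
      = ∑ i, ((Uᴴ * ρ * U) i i).re * ⨅ i, hA.eigenvalues i := by
        rw [← Finset.sum_mul, htr, one_mul]
    _ ≤ _ := by
        refine Finset.sum_le_sum fun i _ => mul_le_mul_of_nonneg_left ?_ ?_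
        · exact ciInf_le (Set.finite_range _).bddBelow i
        · exact (Complex.le_def.1 (hps.diag_nonneg (i := i))).1

/-- Each eigenvalue of `B` is the magnetization of the projection on its eigenvector. -/
theorem exists_density_eigenvalue {n : ℕ} {B : Matrix (Fin n) (Fin n) ℂ} (hB : B.IsHermitian)
    (i : Fin n) : ∃ ρ : Matrix (Fin n) (Fin n) ℂ,
      IsDensityMatrix ρ ∧ ((ρ * B).trace).re = hB.eigenvalues i := by
  set U : Matrix (Fin n) (Fin n) ℂ := (hB.eigenvectorUnitary : Matrix (Fin n) (Fin n) ℂ) with hU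
  have hUU : Uᴴ * U = 1 := Unitary.coe_star_mul_self hB.eigenvectorUnitary
  set E : Matrix (Fin n) (Fin n) ℂ := diagonal (Pi.single i 1) with hE
  have hEps : E.PosSemidef := PosSemidef.diagonal (Pi.single_nonneg.2 zero_le_one)
  refine ⟨U * E * Uᴴ, ⟨hEps.mul_mul_conjTranspose_same U, ?_⟩, ?_⟩
  · rw [trace_mul_comm, ← mul_assoc, hUU, one_mul, hE, trace_diagonal]
    simp
  · have h : Uᴴ * (U * E * Uᴴ) * U = E := by
      rw [← mul_assoc, ← mul_assoc, hUU, one_mul, mul_assoc, hUU, mul_one]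
    rw [re_trace_mul_eq_sum hB, ← hU, h, Finset.sum_eq_single i]
    · simp [hE]
    · intro j _ hj
      simp [hE, hj]
    · simp

theorem exists_density_of_mem_Icc {n : ℕ} (hn : 1 ≤ n) {B : Matrix (Fin n) (Fin n) ℂ}
    (hB : B.IsHermitian) {M : ℝ} (hM : M ∈ Set.Icc (lamMin B) (lamMax B)) :
    ∃ ρ : Matrix (Fin n) (Fin n) ℂ, IsDensityMatrix ρ ∧ ((ρ * B).trace).re = M := by
  have : Nonempty (Fin n) := ⟨⟨0, hn⟩⟩
  obtain ⟨i, hi⟩ := exists_eq_ciInf_of_finite (f := hB.eigenvalues)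
  obtain ⟨j, hj⟩ := exists_eq_ciSup_of_finite (f := hB.eigenvalues)
  obtain ⟨ρ, hρ, hρM⟩ := exists_density_eigenvalue hB i
  obtain ⟨σ, hσ, hσM⟩ := exists_density_eigenvalue hB j
  rw [lamMin, lamMax, dif_pos hB, dif_pos hB, ← hi, ← hj] at hM
  rw [← segment_eq_Icc (hM.1.trans hM.2)] at hM
  obtain ⟨a, b, ha, hb, hab, h⟩ := hM
  exact ⟨_, hρ.combo hσ ha hb hab, by rw [re_trace_combo, hρM, hσM]; exact h⟩

/-- The minimum energy constrained by the magnetization is a convex function of the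
magnetization on `[λ_min B, λ_max B]`. -/
theorem stmt4 {n : ℕ} (hn : 1 ≤ n) (A B : Matrix (Fin n) (Fin n) ℂ)
    (hA : A.IsHermitian) (hB : B.IsHermitian) :
    ConvexOn ℝ (Set.Icc (lamMin B) (lamMax B))
      (fun M : ℝ => sInf {x : ℝ | ∃ ρ : Matrix (Fin n) (Fin n) ℂ,
        IsDensityMatrix ρ ∧ ((ρ * B).trace).re = M ∧ x = ((ρ * A).trace).re}) := by
  refine ⟨convex_Icc _ _, fun x hx y hy a b ha hb hab => ?_⟩
  have hne : ∀ M ∈ Set.Icc (lamMin B) (lamMax B), {x : ℝ | ∃ ρ : Matrix (Fin n) (Fin n) ℂ,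
      IsDensityMatrix ρ ∧ ((ρ * B).trace).re = M ∧ x = ((ρ * A).trace).re}.Nonempty := by
    intro M hM
    obtain ⟨ρ, hρ, hρM⟩ := exists_density_of_mem_Icc hn hB hM
    exact ⟨_, ρ, hρ, hρM, rfl⟩
  refine le_of_forall_pos_le_add fun ε hε => ?_
  -- Mixing states that are optimal up to `ε` suffices, so attainment of the infima is not needed.
  obtain ⟨_, ⟨ρ, hρ, hρx, rfl⟩, h1⟩ := Real.lt_sInf_add_pos (hne x hx) hε
  obtain ⟨_, ⟨σ, hσ, hσy, rfl⟩, h2⟩ := Real.lt_sInf_add_pos (hne y hy) hε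
  refine le_trans (csInf_le ?_ ⟨_, hρ.combo hσ ha hb hab, ?_, rfl⟩) ?_
  · refine ⟨⨅ i, hA.eigenvalues i, ?_⟩
    rintro _ ⟨τ, hτ, -, rfl⟩
    exact iInf_eigenvalues_le hA hτ
  · rw [re_trace_combo, hρx, hσy, smul_eq_mul, smul_eq_mul]
  · rw [re_trace_combo, smul_eq_mul, smul_eq_mul]
    have h3 := mul_le_mul_of_nonneg_left h1.le ha
    have h4 := mul_le_mul_of_nonneg_left h2.le hb
    have h5 : a * ε + b * ε = ε := by rw [← add_mul, hab, one_mul]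
    linarith
end

section
/- Let (Ω, μ) be a probability space and let P, Q, R, S, T : Ω → ℝ be measurable functions with (P − R)² and (Q − S)² integrable, such that P(ω) ≤ Q(ω) and S(ω) + T(ω)² ≤ R(ω) for all ω. Then ∫ T² dμ ≤ √(∫ (P − R)² dμ) + √(∫ (Q − S)² dμ). (If P ≤ Q and S + T² ≤ R, then the mean square of T is bounded by the sum of the root-mean-square deviations of P from R and of Q from S.) -/
/-!
Pointwise, `T² ≤ R - S ≤ (R - P) + (Q - S)`, because `Q - P ≥ 0`. Integrating, it remains to bound
the mean of a square-integrable function on a probability space by its root mean square, which is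
the nonnegativity of the variance.
-/

open MeasureTheory

theorem integral_le_sqrt_integral_sq {Ω : Type*} [MeasurableSpace Ω] {μ : Measure Ω}
    [IsProbabilityMeasure μ] {f : Ω → ℝ} (hf : MemLp f 2 μ) :
    ∫ ω, f ω ∂μ ≤ Real.sqrt (∫ ω, (f ω) ^ 2 ∂μ) := by
  apply Real.le_sqrt_of_sq_le
  have h := ProbabilityTheory.variance_eq_sub hf
  have h0 := ProbabilityTheory.variance_nonneg f μ
  simp only [Pi.pow_apply] at h
  linarith

/-- If `P ≤ Q` and `S + T² ≤ R` pointwise, then the mean square of `T` is bounded by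
the sum of the root-mean-square deviations of `P` from `R` and of `Q` from `S`. -/
theorem stmt12 {Ω : Type*} [MeasurableSpace Ω] (μ : Measure Ω) [IsProbabilityMeasure μ]
    (P Q R S T : Ω → ℝ)
    (hPm : Measurable P) (hQm : Measurable Q) (hRm : Measurable R)
    (hSm : Measurable S) (hTm : Measurable T)
    (hPR : Integrable (fun ω => (P ω - R ω) ^ 2) μ)
    (hQS : Integrable (fun ω => (Q ω - S ω) ^ 2) μ)
    (hPQ : ∀ ω, P ω ≤ Q ω) (hSTR : ∀ ω, S ω + (T ω) ^ 2 ≤ R ω) :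
    ∫ ω, (T ω) ^ 2 ∂μ
      ≤ Real.sqrt (∫ ω, (P ω - R ω) ^ 2 ∂μ) + Real.sqrt (∫ ω, (Q ω - S ω) ^ 2 ∂μ) := by
  have hRP : MemLp (fun ω => R ω - P ω) 2 μ := by
    refine (memLp_two_iff_integrable_sq (hRm.sub hPm).aestronglyMeasurable).2 ?_
    exact hPR.congr (.of_forall fun ω => sub_sq_comm (P ω) (R ω))
  have hQS' : MemLp (fun ω => Q ω - S ω) 2 μ :=
    (memLp_two_iff_integrable_sq (hQm.sub hSm).aestronglyMeasurable).2 hQS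
  have hi₁ := hRP.integrable one_le_two
  have hi₂ := hQS'.integrable one_le_two
  calc ∫ ω, (T ω) ^ 2 ∂μ ≤ ∫ ω, ((R ω - P ω) + (Q ω - S ω)) ∂μ := by
        refine integral_mono_of_nonneg (.of_forall fun ω => sq_nonneg (T ω)) (hi₁.add hi₂)
          (.of_forall fun ω => ?_)
        have h₁ := hPQ ω
        have h₂ := hSTR ω
        change (T ω) ^ 2 ≤ (R ω - P ω) + (Q ω - S ω)
        linarith
    _ = ∫ ω, (R ω - P ω) ∂μ + ∫ ω, (Q ω - S ω) ∂μ := integral_add hi₁ hi₂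
    _ ≤ Real.sqrt (∫ ω, (R ω - P ω) ^ 2 ∂μ) + Real.sqrt (∫ ω, (Q ω - S ω) ^ 2 ∂μ) :=
        add_le_add (integral_le_sqrt_integral_sq hRP) (integral_le_sqrt_integral_sq hQS')
    _ = _ := by
        congr 3
        funext ω
        ring
end

section
/- Let D be a real number with D ≥ 2 and define the sequence (n_m) by n₀ = 0 and n_{m+1} = 1/(D + 2 − 2D·n_m). Then for every m we have 0 ≤ n_m < 1/D (in particular the denominator D + 2 − 2D·n_m is positive, so the sequence is well defined), the sequence (n_m) is monotonically increasing, and n_m converges to 1/D as m → ∞. -/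
/-!
For `x < 1/D` the denominator `D + 2 - 2Dx` exceeds `D`, so the bounds `0 ≤ x < 1/D` are preserved.
The identity `1 - x (D + 2 - 2Dx) = (1 - Dx)(1 - 2x)` together with `1/D ≤ 1/2` gives monotonicity,
and shows that the limit, a fixed point which is at most `1/D`, is the smaller fixed point `1/D`.
-/

open Filter

/-- The recurrence `n_{m+1} = 1/(D + 2 - 2 D n_m)` with `n₀ = 0` stays in `[0, 1/D)`,
is monotonically increasing, and converges to `1/D`. -/
theorem stmt14 (D : ℝ) (hD : 2 ≤ D) (a : ℕ → ℝ) (h0 : a 0 = 0)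
    (hrec : ∀ m, a (m + 1) = 1 / (D + 2 - 2 * D * a m)) :
    (∀ m, 0 ≤ a m ∧ a m < 1 / D) ∧ Monotone a ∧ Tendsto a atTop (nhds (1 / D)) := by
  have hD0 : 0 < D := by linarith
  have hhalf : 1 / D ≤ 1 / 2 := one_div_le_one_div_of_le two_pos hD
  have hden : ∀ x, x < 1 / D → D < D + 2 - 2 * D * x := by
    intro x hx
    rw [lt_div_iff₀ hD0] at hx
    linarith
  have hb : ∀ m, 0 ≤ a m ∧ a m < 1 / D := by
    intro m
    induction m with
    | zero => rw [h0]; exact ⟨le_rfl, by positivity⟩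
    | succ k ih =>
      have h := hden _ ih.2
      rw [hrec]
      exact ⟨one_div_nonneg.2 (by linarith), one_div_lt_one_div_of_lt hD0 h⟩
  have hmono : Monotone a := by
    refine monotone_nat_of_le_succ fun m => ?_
    have h := hden _ (hb m).2
    have h1 := (lt_div_iff₀ hD0).1 (hb m).2
    have h2 := (hb m).2
    rw [hrec, le_div_iff₀ (by linarith)]
    have h3 : 0 ≤ (1 - a m * D) * (1 - 2 * a m) :=
      mul_nonneg (by linarith) (by linarith)
    linarith
  refine ⟨hb, hmono, ?_⟩
  have hbdd : BddAbove (Set.range a) := ⟨1 / D, by rintro _ ⟨m, rfl⟩; exact (hb m).2.le⟩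
  obtain ⟨L, hL⟩ : ∃ L, Tendsto a atTop (nhds L) := ⟨_, tendsto_atTop_ciSup hmono hbdd⟩
  have hLle : L ≤ 1 / D := le_of_tendsto' hL fun m => (hb m).2.le
  have hfix : L * (D + 2 - 2 * D * L) = 1 := by
    have hlim : Tendsto (fun m => a (m + 1) * (D + 2 - 2 * D * a m)) atTop
        (nhds (L * (D + 2 - 2 * D * L))) :=
      (hL.comp (tendsto_add_atTop_nat 1)).mul ((hL.const_mul (2 * D)).const_sub (D + 2))
    refine tendsto_nhds_unique hlim (tendsto_const_nhds.congr fun m => ?_)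
    have h := hden _ (hb m).2
    rw [hrec, one_div_mul_cancel (by linarith)]
  have hprod : (1 - L * D) * (1 - 2 * L) = 0 := by linarith
  have hLeq : L = 1 / D := by
    rcases mul_eq_zero.1 hprod with h | h
    · rw [eq_div_iff hD0.ne']; linarith
    -- `L = 1/2 ≤ 1/D ≤ 1/2` forces `D = 2`, where the two fixed points coincide.
    · linarith
  rwa [hLeq] at hL
end

section
/- Let a ≤ b be real numbers and let g : ℝ → ℝ be convex on [a, b] and continuous on [a, b]. Define f : ℝ → ℝ by f(γ) = inf { g(x) − γ·x : x ∈ [a, b] }. Then for every x ∈ [a, b], g(x) = sup { f(γ) + γ·x : γ ∈ ℝ }. (The inverse Legendre transformation of the Legendre transformation of a convex continuous function on a compact interval recovers the original function.) -/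
/-!
Each affine function `t ↦ f(γ) + γ * t` lies below `g` on `[a, b]` by definition of `f`, so the
supremum at `x` is at most `g x`. Conversely, `f(γ)` is the largest intercept of an affine minorant
of `g` with slope `γ`, and a convex lower semicontinuous function on a closed set has, at `x`,
affine minorants taking any prescribed value below `g x`
(`ConvexOn.exists_affine_le_of_lt_real`, a consequence of Hahn–Banach separation).
-/

/-- The inverse Legendre transformation of the Legendre transformation of a convex
continuous function on a compact interval recovers the original function. -/
theorem stmt17 (a b : ℝ) (hab : a ≤ b) (g : ℝ → ℝ)
    (hconv : ConvexOn ℝ (Set.Icc a b) g) (hcont : ContinuousOn g (Set.Icc a b)) :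
    ∀ x ∈ Set.Icc a b,
      g x = sSup {y : ℝ | ∃ γ : ℝ,
        y = sInf {z : ℝ | ∃ t ∈ Set.Icc a b, z = g t - γ * t} + γ * x} := by
  intro x hx
  -- The infimum is over a set bounded below (compactness), so it is not a junk value and each
  -- competitor of the supremum is at most `g x`, by testing the infimum at `t = x`.
  have hbdd (γ : ℝ) : BddBelow {z : ℝ | ∃ t ∈ Set.Icc a b, z = g t - γ * t} := by
    have hc : ContinuousOn (fun t => g t - γ * t) (Set.Icc a b) := by fun_prop
    refine (isCompact_Icc.bddBelow_image hc).mono ?_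
    rintro z ⟨t, ht, rfl⟩
    exact ⟨t, ht, rfl⟩
  symm
  refine csSup_eq_of_forall_le_of_forall_lt_exists_gt ⟨_, 0, rfl⟩ ?_ ?_
  · rintro y ⟨γ, rfl⟩
    have := csInf_le (hbdd γ) ⟨x, hx, rfl⟩
    linarith
  · intro w hw
    -- An affine minorant `γ * t + c` of `g` on `[a, b]` with value above `w` at `x`: its
    -- intercept `c` is a lower bound for `g t - γ * t`.
    obtain ⟨v, hwv, hvg⟩ := exists_between hw
    obtain ⟨γ, c, hle, heq⟩ :=
      hconv.exists_affine_le_of_lt_real hx hvg isClosed_Icc hcont.lowerSemicontinuousOn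
    refine ⟨_, ⟨γ, rfl⟩, ?_⟩
    have hc : c ≤ sInf {z : ℝ | ∃ t ∈ Set.Icc a b, z = g t - γ * t} := by
      refine le_csInf ⟨_, x, hx, rfl⟩ ?_
      rintro z ⟨t, ht, rfl⟩
      have := hle t ht
      linarith
    linarith
end
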